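/- arXiv:1803.06808 — 7 statements merged into one kernel-verified Lean document; each statement's English description precedes it below -/
import Mathlib

section
/- Let M be a complex vector space carrying a level-one representation of the rank-ℓ Heisenberg algebra, let λ ∈ ℂ, and let v ∈ M be a highest weight vector of weight λ in direction 1. Set κ = 4, τ₁ = 2 − 4λ², and τᵢ = 2 for 2 ≤ i ≤ ℓ. Then the families of vectors defining the Segal–Sugawara values L₋₂v, L₋₁v and L₋₁(L₋₁v) have finite support, and −2·L₋₂v + (κ/2)·L₋₁(L₋₁v) + (1/2)·Σ_{i=1}^{ℓ} τᵢ·aᵢ(−1)²v = 0. -/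
/-!
A vector `u` killed by every `aᵢ(n)` with `n > K` sees only the modes `N - K ≤ k ≤ K` of `L_N`, because
normal ordering lets the larger mode act first (`sugFam_eq_zero`). This bounds all three supports and,
with `e` the distinguished direction (direction 1) and `w = a_e(-1) v`, reduces the sums to

* `L₋₂ v = λ a_e(-2) v + (1/2) Σ aᵢ(-1)² v`,
* `L₋₁ v = λ w`,
* `L₋₁ w = λ a_e(-1)² v + a_e(-2) v`,

where the last line uses `aᵢ(0) w = δ_{ie} λ w`, `aᵢ(1) w = δ_{ie} v` and `aᵢ(n) w = 0` for `n ≥ 2`,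
all consequences of the commutation relations. With `κ = 4` the `a_e(-2) v` terms cancel, and what
remains is `Σ (τᵢ / 2 - 1 + 2 λ² δ_{ie}) aᵢ(-1)² v`, each coefficient of which vanishes.
-/

open scoped BigOperators

namespace SLEHeisenberg0

variable {M : Type*} [AddCommGroup M] [Module ℂ M]

/-- Normal ordered product `:A(p)B(q):`. -/
noncomputable def no (A B : ℤ → Module.End ℂ M) (p q : ℤ) : Module.End ℂ M :=
  if p < q then A p * B q else B q * A p

/-- The family whose (finitely supported) sum defines the Segal–Sugawara value `L_N u`. -/
noncomputable def sugFam {ℓ : ℕ} (a : Fin ℓ → ℤ → Module.End ℂ M) (N : ℤ) (u : M)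
    (p : Fin ℓ × ℤ) : M :=
  no (a p.1) (a p.1) (N - p.2) p.2 u

/-- The Segal–Sugawara value `L_N u = (1/2)·Σ_i Σ_k :aᵢ(N−k)aᵢ(k): u`. -/
noncomputable def sugawara {ℓ : ℕ} (a : Fin ℓ → ℤ → Module.End ℂ M) (N : ℤ) (u : M) : M :=
  (2 : ℂ)⁻¹ • ∑ᶠ p : Fin ℓ × ℤ, sugFam a N u p

section
variable {ℓ : ℕ} (a : Fin ℓ → ℤ → Module.End ℂ M)

theorem sugFam_eq_zero {N K : ℤ} {u : M}
    (h : ∀ (i : Fin ℓ) (n : ℤ), K < n → a i n u = 0) (i : Fin ℓ) (k : ℤ)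
    (hk : k ∉ Finset.Icc (N - K) K) : sugFam a N u (i, k) = 0 := by
  rw [Finset.mem_Icc] at hk
  unfold sugFam no
  split_ifs with hlt
  · have hK : K < k := by grind
    simp [h i k hK]
  · have hK : K < N - k := by grind
    simp [h i (N - k) hK]

theorem sugFam_support_subset {N K : ℤ} {u : M}
    (h : ∀ (i : Fin ℓ) (n : ℤ), K < n → a i n u = 0) :
    Function.support (sugFam a N u) ⊆
      ((Finset.univ ×ˢ Finset.Icc (N - K) K : Finset (Fin ℓ × ℤ)) : Set (Fin ℓ × ℤ)) := by
  rintro ⟨i, k⟩ hne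
  by_contra hk
  exact hne (sugFam_eq_zero a h i k (by simpa using hk))

theorem sugFam_support_finite {N K : ℤ} {u : M}
    (h : ∀ (i : Fin ℓ) (n : ℤ), K < n → a i n u = 0) :
    (Function.support (sugFam a N u)).Finite :=
  (Finset.finite_toSet _).subset (sugFam_support_subset a h)

theorem sugawara_eq_sum {N K : ℤ} {u : M}
    (h : ∀ (i : Fin ℓ) (n : ℤ), K < n → a i n u = 0) :
    sugawara a N u = (2 : ℂ)⁻¹ • ∑ i, ∑ k ∈ Finset.Icc (N - K) K, sugFam a N u (i, k) := by
  rw [sugawara, finsum_eq_sum_of_support_subset _ (sugFam_support_subset a h), Finset.sum_product]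

end

theorem heisenberg_annihilator {ℓ : ℕ} (hℓ : 0 < ℓ)
    (a : Fin ℓ → ℤ → Module.End ℂ M)
    -- level-one representation of the rank-ℓ Heisenberg algebra
    (hcomm : ∀ (i j : Fin ℓ) (m n : ℤ),
      a i m * a j n - a j n * a i m =
        if i = j ∧ m + n = 0 then (m : ℂ) • (1 : Module.End ℂ M) else 0)
    (lam : ℂ) (v : M)
    -- highest weight vector of weight `lam` in direction 1
    (hann : ∀ (i : Fin ℓ) (n : ℤ), 1 ≤ n → a i n v = 0)
    (hwt : ∀ i : Fin ℓ, a i 0 v = if i = ⟨0, hℓ⟩ then lam • v else 0)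
    (κ : ℂ) (hκ : κ = 4)
    (τ : Fin ℓ → ℂ) (hτ1 : τ ⟨0, hℓ⟩ = 2 - 4 * lam ^ 2)
    (hτ : ∀ i : Fin ℓ, i ≠ ⟨0, hℓ⟩ → τ i = 2) :
    (Function.support (sugFam a (-2) v)).Finite ∧
    (Function.support (sugFam a (-1) v)).Finite ∧
    (Function.support (sugFam a (-1) (sugawara a (-1) v))).Finite ∧
    (-2 : ℂ) • sugawara a (-2) v + (κ / 2) • sugawara a (-1) (sugawara a (-1) v)
      + (2 : ℂ)⁻¹ • ∑ i : Fin ℓ, τ i • (a i (-1) * a i (-1)) v = 0 := by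
  set e : Fin ℓ := ⟨0, hℓ⟩ with he
  have hv : ∀ (i : Fin ℓ) (n : ℤ), 0 < n → a i n v = 0 := fun i n hn => hann i n hn
  have hcv : ∀ (i j : Fin ℓ) (m n : ℤ) (u : M), a i m (a j n u) =
      a j n (a i m u) + if i = j ∧ m + n = 0 then (m : ℂ) • u else 0 := by
    intro i j m n u
    have := congrArg (fun f : Module.End ℂ M => f u) (hcomm i j m n)
    simp only [LinearMap.sub_apply, Module.End.mul_apply] at this
    rw [← sub_eq_iff_eq_add', this]
    split_ifs <;> simp
  have hw0 : ∀ i, a i 0 (a e (-1) v) = if i = e then lam • a e (-1) v else 0 := by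
    intro i
    rw [hcv, hwt]
    split_ifs <;> simp_all
  have hw1 : ∀ i, a i 1 (a e (-1) v) = if i = e then v else 0 := by
    intro i
    rw [hcv, hann i 1 le_rfl]
    simp
  have hw2 : ∀ (i : Fin ℓ) (n : ℤ), 1 < n → a i n (a e (-1) v) = 0 := by
    intro i n hn
    rw [hcv, hann i n hn.le, if_neg (by omega)]
    simp
  have hv0 : ∀ (i : Fin ℓ) (m : ℤ), a i m (a i 0 v) = if i = e then lam • a e m v else 0 := by
    intro i m
    rw [hwt]
    split_ifs with h <;> simp [h]
  have hww0 : ∀ (i : Fin ℓ) (m : ℤ), a i m (a i 0 (a e (-1) v)) =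
      if i = e then lam • a e m (a e (-1) v) else 0 := by
    intro i m
    rw [hw0]
    split_ifs with h <;> simp [h]
  have hww1 : ∀ (i : Fin ℓ) (m : ℤ), a i m (a i 1 (a e (-1) v)) =
      if i = e then a e m v else 0 := by
    intro i m
    rw [hw1]
    split_ifs with h <;> simp [h]
  have hL2 : sugawara a (-2) v =
      lam • a e (-2) v + (2 : ℂ)⁻¹ • ∑ i, a i (-1) (a i (-1) v) := by
    have hI : Finset.Icc ((-2 : ℤ) - 0) 0 = {-2, -1, 0} := by decide
    rw [sugawara_eq_sum a hv, hI]
    simp [sugFam, no, hv0, Finset.sum_add_distrib]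
    module
  have hL1 : sugawara a (-1) v = lam • a e (-1) v := by
    have hI : Finset.Icc ((-1 : ℤ) - 0) 0 = {-1, 0} := by decide
    rw [sugawara_eq_sum a hv, hI]
    simp [sugFam, no, hv0, Finset.sum_add_distrib]
    module
  have hLw : ∀ (i : Fin ℓ) (n : ℤ), 1 < n → a i n (sugawara a (-1) v) = 0 := by
    intro i n hn
    rw [hL1, map_smul, hw2 i n hn, smul_zero]
  have hL11 : sugawara a (-1) (sugawara a (-1) v) =
      lam ^ 2 • a e (-1) (a e (-1) v) + lam • a e (-2) v := by
    have hI : Finset.Icc ((-1 : ℤ) - 1) 1 = {-2, -1, 0, 1} := by decide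
    rw [sugawara_eq_sum a hLw, hI, hL1]
    simp [sugFam, no, hww0, hww1, Finset.sum_add_distrib, ← Finset.smul_sum]
    module
  refine ⟨sugFam_support_finite a hv, sugFam_support_finite a hv,
    sugFam_support_finite a hLw, ?_⟩
  have hsum : ∑ i, τ i • (a i (-1) * a i (-1)) v =
      (2 : ℂ) • ∑ i, a i (-1) (a i (-1) v) - (4 * lam ^ 2) • a e (-1) (a e (-1) v) := by
    have hτ' : ∀ i, τ i = 2 - if i = e then 4 * lam ^ 2 else 0 := by
      intro i
      split_ifs with h
      · rw [h, hτ1]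
      · rw [hτ i h, sub_zero]
    simp [hτ', sub_smul, Finset.smul_sum, ite_smul]
  rw [hsum, hL2, hL11, hκ]
  module

end SLEHeisenberg0
end

section
/- Let M be a complex vector space carrying a level-one representation of the affine Lie algebra of sl₂, and let v ∈ M be a fundamental-type highest weight vector. Let κ, τ ∈ ℂ satisfy κ + 2τ − 4 = 0. Then the families defining the Segal–Sugawara values L₋₂v, L₋₁v and L₋₁(L₋₁v) have finite support, and −2·L₋₂v + (κ/2)·L₋₁(L₋₁v) + (τ/2)·( (1/2)H(−1)² + E(−1)F(−1) + F(−1)E(−1) )v = 0. -/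
/-!
Each of the three Sugawara sums has at most four nonzero terms, because `v` is killed by all
positive modes and `H(-1)v` by all modes of index at least `2`; normal ordering puts the mode with
the larger index on the right (`sugFam_eq_zero`). Commuting the remaining modes to the right and
inserting the null-vector relations for `E(-1)v`, `E(-1)F(0)v` and `E(-2)F(0)v` gives, with
`w = (1/2) H(-1)² v + H(-2) v`,
* `L₋₂ v = (1/2) w`,
* `L₋₁ v = (1/2) H(-1) v`, and `L₋₁ (L₋₁ v) = (1/2) w`,
* `((1/2) H(-1)² + E(-1)F(-1) + F(-1)E(-1)) v = w`.
The left-hand side is therefore `(-1 + κ/4 + τ/2) w`, which vanishes since `κ + 2τ = 4`.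
-/

open scoped BigOperators

namespace SLEAffineSL2One

variable {M : Type*} [AddCommGroup M] [Module ℂ M]

/-- Normal ordered product `:A(p)B(q):`. -/
noncomputable def no (A B : ℤ → Module.End ℂ M) (p q : ℤ) : Module.End ℂ M :=
  if p < q then A p * B q else B q * A p

/-- The family whose (finitely supported) sum defines the level-one Segal–Sugawara
value `L_N u`. -/
noncomputable def sugFam (E H F : ℤ → Module.End ℂ M) (N : ℤ) (u : M) (k : ℤ) : M :=
  ((2 : ℂ)⁻¹ • no H H (N - k) k + no E F (N - k) k + no F E (N - k) k) u

/-- The level-one Segal–Sugawara value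
`L_N u = (1/6)·Σ_k ((1/2):H(N−k)H(k): + :E(N−k)F(k): + :F(N−k)E(k):) u`. -/
noncomputable def sugawara (E H F : ℤ → Module.End ℂ M) (N : ℤ) (u : M) : M :=
  (6 : ℂ)⁻¹ • ∑ᶠ k : ℤ, sugFam E H F N u k

/-- If all modes of index at least `d ≥ 1` kill `u`, then for `N < 0` only the indices
`N - d < k < d` contribute to `L_N u`. -/
lemma sugFam_eq_zero (E H F : ℤ → Module.End ℂ M) (N d : ℤ) (hN : N < 0) (hd : 1 ≤ d) (u : M)
    (hu : ∀ n : ℤ, d ≤ n → E n u = 0 ∧ H n u = 0 ∧ F n u = 0) (k : ℤ)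
    (hk : k ∉ Finset.Ioo (N - d) d) : sugFam E H F N u k = 0 := by
  rw [Finset.mem_Ioo, not_and_or, not_lt, not_lt] at hk
  rcases hk with hk | hk
  · obtain ⟨h1, h2, h3⟩ := hu (N - k) (by omega)
    have : ¬ N - k < k := by omega
    simp [sugFam, no, this, h1, h2, h3]
  · obtain ⟨h1, h2, h3⟩ := hu k hk
    have : N - k < k := by omega
    simp [sugFam, no, this, h1, h2, h3]

lemma sugFam_support_subset (E H F : ℤ → Module.End ℂ M) (N d : ℤ) (hN : N < 0) (hd : 1 ≤ d)
    (u : M) (hu : ∀ n : ℤ, d ≤ n → E n u = 0 ∧ H n u = 0 ∧ F n u = 0) :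
    Function.support (sugFam E H F N u) ⊆ (Finset.Ioo (N - d) d : Finset ℤ) := by
  intro k hk
  by_contra h
  exact hk (sugFam_eq_zero E H F N d hN hd u hu k (by simpa using h))

lemma sugawara_eq_sum (E H F : ℤ → Module.End ℂ M) (N d : ℤ) (hN : N < 0) (hd : 1 ≤ d)
    (u : M) (hu : ∀ n : ℤ, d ≤ n → E n u = 0 ∧ H n u = 0 ∧ F n u = 0) :
    sugawara E H F N u = (6 : ℂ)⁻¹ • ∑ k ∈ Finset.Ioo (N - d) d, sugFam E H F N u k := by
  rw [sugawara, finsum_eq_sum_of_support_subset _ (sugFam_support_subset E H F N d hN hd u hu)]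

theorem main (E H F : ℤ → Module.End ℂ M)
    -- level-one representation of the affine Lie algebra of sl₂
    (hHE : ∀ m n : ℤ, H m * E n - E n * H m = (2 : ℂ) • E (m + n))
    (hHF : ∀ m n : ℤ, H m * F n - F n * H m = -((2 : ℂ) • F (m + n)))
    (hEF : ∀ m n : ℤ, E m * F n - F n * E m =
      H (m + n) + (if m + n = 0 then (m : ℂ) • (1 : Module.End ℂ M) else 0))
    (hHH : ∀ m n : ℤ, H m * H n - H n * H m =
      if m + n = 0 then ((2 * m : ℤ) : ℂ) • (1 : Module.End ℂ M) else 0)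
    (hEE : ∀ m n : ℤ, E m * E n = E n * E m)
    (hFF : ∀ m n : ℤ, F m * F n = F n * F m)
    (v : M)
    -- fundamental-type highest weight vector
    (hann : ∀ n : ℤ, 1 ≤ n → E n v = 0 ∧ H n v = 0 ∧ F n v = 0)
    (hE0 : E 0 v = 0)
    (hH0 : H 0 v = v)
    (hE1 : E (-1) v = 0)
    (hEF1 : E (-1) (F 0 v) = H (-1) v)
    (hEF2 : E (-2) (F 0 v) = (2 : ℂ)⁻¹ • (H (-1) (H (-1) v) + H (-2) v))
    (κ τ : ℂ) (hκτ : κ + 2 * τ - 4 = 0) :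
    (Function.support (sugFam E H F (-2) v)).Finite ∧
    (Function.support (sugFam E H F (-1) v)).Finite ∧
    (Function.support (sugFam E H F (-1) (sugawara E H F (-1) v))).Finite ∧
    (-2 : ℂ) • sugawara E H F (-2) v
      + (κ / 2) • sugawara E H F (-1) (sugawara E H F (-1) v)
      + (τ / 2) • ((2 : ℂ)⁻¹ • (H (-1) * H (-1)) + E (-1) * F (-1) + F (-1) * E (-1)) v
      = 0 := by
  have cHE (m n : ℤ) (x : M) : H m (E n x) = E n (H m x) + (2 : ℂ) • E (m + n) x := by
    have := LinearMap.congr_fun (hHE m n) x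
    simp only [LinearMap.sub_apply, Module.End.mul_apply, LinearMap.smul_apply] at this
    rw [← this]; abel
  have cHF (m n : ℤ) (x : M) : H m (F n x) = F n (H m x) - (2 : ℂ) • F (m + n) x := by
    have := LinearMap.congr_fun (hHF m n) x
    simp only [LinearMap.sub_apply, Module.End.mul_apply, LinearMap.smul_apply,
      LinearMap.neg_apply] at this
    rw [sub_eq_add_neg, ← this]; abel
  have cHH (m n : ℤ) (x : M) : H m (H n x) =
      H n (H m x) + if m + n = 0 then ((2 * m : ℤ) : ℂ) • x else 0 := by
    have := LinearMap.congr_fun (hHH m n) x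
    simp only [LinearMap.sub_apply, Module.End.mul_apply] at this
    rw [← sub_eq_iff_eq_add', this]
    split_ifs <;> simp
  have hEFm : E (-1) (F (-1) v) = H (-2) v := by
    have := LinearMap.congr_fun (hEF (-1) (-1)) v
    simpa [hE1] using this
  set h₁ := H (-1) v with hh₁
  have hann₁ (n : ℤ) (hn : 2 ≤ n) : E n h₁ = 0 ∧ H n h₁ = 0 ∧ F n h₁ = 0 := by
    obtain ⟨a1, a2, a3⟩ := hann n (by omega)
    obtain ⟨b1, b2, b3⟩ := hann (-1 + n) (by omega)
    have e1 := cHE (-1) n v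
    have e2 := cHF (-1) n v
    have e3 := cHH n (-1) v
    have h0 : n + -1 ≠ 0 := by omega
    simp only [a1, a2, a3, b1, b3, h0, map_zero, smul_zero, add_zero, sub_zero, if_false,
      ← hh₁] at e1 e2 e3
    exact ⟨e1.symm, e3, e2.symm⟩
  have kE1 : E 1 h₁ = 0 := by
    simpa [← hh₁, hE0, (hann 1 le_rfl).1] using (cHE (-1) 1 v).symm
  have kE0 : E 0 h₁ = 0 := by
    simpa [← hh₁, hE0, hE1] using (cHE (-1) 0 v).symm
  have kH1 : H 1 h₁ = (2 : ℂ) • v := by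
    simpa [← hh₁, (hann 1 le_rfl).2.1] using cHH 1 (-1) v
  have kH0 : H 0 h₁ = h₁ := by
    simpa [← hh₁, hH0] using cHH 0 (-1) v
  have kF1 : F 1 h₁ = (2 : ℂ) • F 0 v := by
    have := cHF (-1) 1 v
    simp only [← hh₁, (hann 1 le_rfl).2.2, map_zero] at this
    exact (sub_eq_zero.1 this.symm)
  have kEF0 : E (-1) (F 0 h₁) = H (-2) v := by
    have e1 : F 0 h₁ = H (-1) (F 0 v) + (2 : ℂ) • F (-1) v := by
      simp [cHF (-1) 0 v, ← hh₁]
    have e2 : E (-1) (H (-1) (F 0 v)) = H (-1) h₁ - (2 : ℂ) • E (-2) (F 0 v) := by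
      have := cHE (-1) (-1) (F 0 v)
      rw [hEF1] at this
      rw [this]; norm_num
    rw [e1, map_add, map_smul, e2, hEFm, hEF2]
    module
  have r₀ : Finset.Ioo (-2 - 1 : ℤ) 1 = {-2, -1, 0} := by decide
  have r₁ : Finset.Ioo (-1 - 1 : ℤ) 1 = {-1, 0} := by decide
  have r₂ : Finset.Ioo (-1 - 2 : ℤ) 2 = {-2, -1, 0, 1} := by decide
  have L2 : sugawara E H F (-2) v = (4 : ℂ)⁻¹ • H (-1) h₁ + (2 : ℂ)⁻¹ • H (-2) v := by
    rw [sugawara_eq_sum E H F (-2) 1 (by norm_num) le_rfl v hann, r₀]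
    simp [sugFam, no, hE0, hH0, hE1, hEF2, hEFm, ← hh₁]
    module
  have L1 : sugawara E H F (-1) v = (2 : ℂ)⁻¹ • h₁ := by
    rw [sugawara_eq_sum E H F (-1) 1 (by norm_num) le_rfl v hann, r₁]
    simp [sugFam, no, hE0, hH0, hEF1, ← hh₁]
    module
  have hannL (n : ℤ) (hn : 2 ≤ n) : E n ((2 : ℂ)⁻¹ • h₁) = 0 ∧ H n ((2 : ℂ)⁻¹ • h₁) = 0 ∧
      F n ((2 : ℂ)⁻¹ • h₁) = 0 := by
    obtain ⟨a, b, c⟩ := hann₁ n hn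
    simp [a, b, c]
  have L11 : sugawara E H F (-1) ((2 : ℂ)⁻¹ • h₁) =
      (4 : ℂ)⁻¹ • H (-1) h₁ + (2 : ℂ)⁻¹ • H (-2) v := by
    rw [sugawara_eq_sum E H F (-1) 2 (by norm_num) (by norm_num) _ hannL, r₂]
    simp [sugFam, no, kE0, kE1, kH0, kH1, kF1, kEF0, hEF2]
    module
  refine ⟨(Finset.finite_toSet _).subset
      (sugFam_support_subset E H F (-2) 1 (by norm_num) le_rfl v hann),
    (Finset.finite_toSet _).subset
      (sugFam_support_subset E H F (-1) 1 (by norm_num) le_rfl v hann), ?_, ?_⟩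
  · rw [L1]
    exact (Finset.finite_toSet _).subset
      (sugFam_support_subset E H F (-1) 2 (by norm_num) (by norm_num) _ hannL)
  · obtain rfl : κ = 4 - 2 * τ := by linear_combination hκτ
    rw [L1, L11, L2]
    simp only [LinearMap.add_apply, LinearMap.smul_apply, Module.End.mul_apply, hEFm, hE1,
      map_zero, ← hh₁]
    module

end SLEAffineSL2One
end

section
/- Let M be a complex vector space carrying a level-one representation of the affine Lie algebra of sl₂, and let w ∈ M be a fundamental-type lowest weight vector. Let κ, τ ∈ ℂ satisfy κ + 2τ − 4 = 0. Then the families defining the Segal–Sugawara values L₋₂w, L₋₁w and L₋₁(L₋₁w) have finite support, and −2·L₋₂w + (κ/2)·L₋₁(L₋₁w) + (τ/2)·( (1/2)H(−1)² + E(−1)F(−1) + F(−1)E(−1) )w = 0. -/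
/-!
In a normally ordered product the larger mode acts first. So on a vector killed by all modes
`n ≥ m`, the terms of `L_N` vanish unless both modes `k` and `N - k` are below `m`
(`sugFam_eq_zero`), and every sum below is over a handful of `k`.

Put `a = H(-1)² w` and `b = H(-2) w`. The two explicit relations for `F(-1)E(0)w` and `F(-2)E(0)w`
are exactly what is needed to rewrite the surviving terms through `H` alone:

* `L₋₁ w = -½ H(-1) w`,
* `L₋₂ w = ¼ a - ½ b`,
* `L₋₁ (H(-1) w) = -½ a + b`, hence `L₋₁ L₋₁ w = ¼ a - ½ b`,
* the quadratic Casimir term with both modes `-1` gives `½ a - b`.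

Everything is therefore a multiple of `¼ a - ½ b`, with total coefficient
`-2 + κ/2 + τ = ½ (κ + 2τ - 4) = 0`.
-/

open scoped BigOperators

namespace SLEAffineSL2Two

variable {M : Type*} [AddCommGroup M] [Module ℂ M]

/-- Normal ordered product `:A(p)B(q):`. -/
noncomputable def no (A B : ℤ → Module.End ℂ M) (p q : ℤ) : Module.End ℂ M :=
  if p < q then A p * B q else B q * A p

/-- The family whose (finitely supported) sum defines the level-one Segal–Sugawara
value `L_N u`. -/
noncomputable def sugFam (E H F : ℤ → Module.End ℂ M) (N : ℤ) (u : M) (k : ℤ) : M :=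
  ((2 : ℂ)⁻¹ • no H H (N - k) k + no E F (N - k) k + no F E (N - k) k) u

/-- The level-one Segal–Sugawara value
`L_N u = (1/6)·Σ_k ((1/2):H(N−k)H(k): + :E(N−k)F(k): + :F(N−k)E(k):) u`. -/
noncomputable def sugawara (E H F : ℤ → Module.End ℂ M) (N : ℤ) (u : M) : M :=
  (6 : ℂ)⁻¹ • ∑ᶠ k : ℤ, sugFam E H F N u k

theorem no_of_lt (A B : ℤ → Module.End ℂ M) {p q : ℤ} (h : p < q) (u : M) :
    no A B p q u = A p (B q u) := by
  simp [no, h]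

theorem no_of_ge (A B : ℤ → Module.End ℂ M) {p q : ℤ} (h : q ≤ p) (u : M) :
    no A B p q u = B q (A p u) := by
  simp [no, not_lt.mpr h]

theorem sugFam_of_lt (E H F : ℤ → Module.End ℂ M) (N k p : ℤ) (u : M) (hp : N - k = p)
    (h : p < k) :
    sugFam E H F N u k
      = (2 : ℂ)⁻¹ • H p (H k u) + E p (F k u) + F p (E k u) := by
  subst hp
  simp [sugFam, no_of_lt _ _ h]

theorem sugFam_of_ge (E H F : ℤ → Module.End ℂ M) (N k p : ℤ) (u : M) (hp : N - k = p)
    (h : k ≤ p) :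
    sugFam E H F N u k
      = (2 : ℂ)⁻¹ • H k (H p u) + F k (E p u) + E k (F p u) := by
  subst hp
  simp [sugFam, no_of_ge _ _ h]

/-- The larger of the two modes `k`, `N - k` acts first, so the term vanishes as soon as that
mode kills the vector. -/
theorem sugFam_eq_zero (E H F : ℤ → Module.End ℂ M) (N m : ℤ) (u : M)
    (hu : ∀ n : ℤ, m ≤ n → E n u = 0 ∧ H n u = 0 ∧ F n u = 0)
    (k : ℤ) (hk : m ≤ k ∨ m ≤ N - k) : sugFam E H F N u k = 0 := by
  rcases lt_or_ge (N - k) k with h | h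
  · obtain ⟨h1, h2, h3⟩ := hu k (by omega)
    simp [sugFam_of_lt E H F N k _ u rfl h, h1, h2, h3]
  · obtain ⟨h1, h2, h3⟩ := hu (N - k) (by omega)
    simp [sugFam_of_ge E H F N k _ u rfl h, h1, h2, h3]

theorem support_sugFam_subset (E H F : ℤ → Module.End ℂ M) (N m : ℤ) (u : M)
    (hu : ∀ n : ℤ, m ≤ n → E n u = 0 ∧ H n u = 0 ∧ F n u = 0) :
    Function.support (sugFam E H F N u) ⊆ (Finset.Ioo (N - m) m : Finset ℤ) := by
  intro k hk
  by_contra hn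
  refine hk (sugFam_eq_zero E H F N m u hu k ?_)
  simp only [Finset.coe_Ioo, Set.mem_Ioo] at hn
  omega

theorem main (E H F : ℤ → Module.End ℂ M)
    -- level-one representation of the affine Lie algebra of sl₂
    (hHE : ∀ m n : ℤ, H m * E n - E n * H m = (2 : ℂ) • E (m + n))
    (hHF : ∀ m n : ℤ, H m * F n - F n * H m = -((2 : ℂ) • F (m + n)))
    (hEF : ∀ m n : ℤ, E m * F n - F n * E m =
      H (m + n) + (if m + n = 0 then (m : ℂ) • (1 : Module.End ℂ M) else 0))
    (hHH : ∀ m n : ℤ, H m * H n - H n * H m =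
      if m + n = 0 then ((2 * m : ℤ) : ℂ) • (1 : Module.End ℂ M) else 0)
    (hEE : ∀ m n : ℤ, E m * E n = E n * E m)
    (hFF : ∀ m n : ℤ, F m * F n = F n * F m)
    (w : M)
    -- fundamental-type lowest weight vector
    (hann : ∀ n : ℤ, 1 ≤ n → E n w = 0 ∧ H n w = 0 ∧ F n w = 0)
    (hF0 : F 0 w = 0)
    (hH0 : H 0 w = -w)
    (hF1 : F (-1) w = 0)
    (hFE1 : F (-1) (E 0 w) = -(H (-1) w))
    (hFE2 : F (-2) (E 0 w) = (2 : ℂ)⁻¹ • (H (-1) (H (-1) w) - H (-2) w))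
    (κ τ : ℂ) (hκτ : κ + 2 * τ - 4 = 0) :
    (Function.support (sugFam E H F (-2) w)).Finite ∧
    (Function.support (sugFam E H F (-1) w)).Finite ∧
    (Function.support (sugFam E H F (-1) (sugawara E H F (-1) w))).Finite ∧
    (-2 : ℂ) • sugawara E H F (-2) w
      + (κ / 2) • sugawara E H F (-1) (sugawara E H F (-1) w)
      + (τ / 2) • ((2 : ℂ)⁻¹ • (H (-1) * H (-1)) + E (-1) * F (-1) + F (-1) * E (-1)) w
      = 0 := by
  have cHE : ∀ (m n : ℤ) (u : M), H m (E n u) = E n (H m u) + (2 : ℂ) • E (m + n) u :=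
    fun m n u => sub_eq_iff_eq_add'.mp (by simpa using LinearMap.congr_fun (hHE m n) u)
  have cHF : ∀ (m n : ℤ) (u : M), H m (F n u) = F n (H m u) - (2 : ℂ) • F (m + n) u := by
    intro m n u
    have h := LinearMap.congr_fun (hHF m n) u
    simp only [LinearMap.sub_apply, Module.End.mul_apply, LinearMap.neg_apply,
      LinearMap.smul_apply] at h
    linear_combination (norm := module) (1 : ℂ) • h
  have cHH : ∀ (m n : ℤ) (u : M), H m (H n u)
      = H n (H m u) + (if m + n = 0 then ((2 * m : ℤ) : ℂ) else 0) • u := by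
    intro m n u
    have h := LinearMap.congr_fun (hHH m n) u
    refine sub_eq_iff_eq_add'.mp ?_
    split_ifs at h ⊢ <;> simpa using h
  have hEn : ∀ n : ℤ, 1 ≤ n → E n w = 0 := fun n hn => (hann n hn).1
  have hHn : ∀ n : ℤ, 1 ≤ n → H n w = 0 := fun n hn => (hann n hn).2.1
  have hFn : ∀ n : ℤ, 1 ≤ n → F n w = 0 := fun n hn => (hann n hn).2.2
  have hFE11 : F (-1) (E (-1) w) = -(H (-2) w) := by
    have h := LinearMap.congr_fun (hEF (-1) (-1)) w
    simp [hF1] at h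
    rw [← h, neg_neg]
  have vE : ∀ n : ℤ, E n (H (-1) w) = H (-1) (E n w) - (2 : ℂ) • E (-1 + n) w := by
    intro n; rw [cHE]; abel
  have vF : ∀ n : ℤ, F n (H (-1) w) = H (-1) (F n w) + (2 : ℂ) • F (-1 + n) w := by
    intro n; rw [cHF]; abel
  have hv : ∀ n : ℤ, 2 ≤ n →
      E n (H (-1) w) = 0 ∧ H n (H (-1) w) = 0 ∧ F n (H (-1) w) = 0 := by
    intro n hn
    refine ⟨?_, ?_, ?_⟩
    · rw [vE, hEn n (by omega), hEn _ (by omega)]; simp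
    · rw [cHH, hHn n (by omega), if_neg (by omega)]; simp
    · rw [vF, hFn n (by omega), hFn _ (by omega)]; simp
  have hH1v : H 1 (H (-1) w) = (2 : ℂ) • w := by
    rw [cHH, hHn 1 le_rfl]; simp
  have hF1v : F 1 (H (-1) w) = 0 := by
    rw [vF, hFn 1 le_rfl]; simp [hF0]
  have hE1v : E 1 (H (-1) w) = -((2 : ℂ) • E 0 w) := by
    rw [vE, hEn 1 le_rfl]; simp
  have hH0v : H 0 (H (-1) w) = -(H (-1) w) := by
    rw [cHH, hH0]; simp
  have hF0v : F 0 (H (-1) w) = 0 := by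
    rw [vF, hF0]; simp [hF1]
  have hFE0v : F (-1) (E 0 (H (-1) w)) = H (-2) w := by
    -- moving `F(-1)` past `H(-1)` brings in both relations for `E(0)w`
    have h := cHF (-1) (-1) (E 0 w)
    norm_num only at h
    rw [hFE1, hFE2, map_neg] at h
    rw [vE, map_sub, map_smul, show (-1 + 0 : ℤ) = -1 by norm_num, hFE11]
    linear_combination (norm := module) (-1 : ℂ) • h
  have s1 := support_sugFam_subset E H F (-1) 1 w hann
  have s2 := support_sugFam_subset E H F (-2) 1 w hann
  have s3 := support_sugFam_subset E H F (-1) 2 (H (-1) w) hv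
  have L1 : sugawara E H F (-1) w = (-(2 : ℂ)⁻¹) • H (-1) w := by
    rw [sugawara, finsum_eq_sum_of_support_subset _ s1,
      show Finset.Ioo (-1 - 1 : ℤ) 1 = {-1, 0} by decide]
    rw [Finset.sum_pair (by norm_num),
      sugFam_of_ge E H F (-1) (-1) 0 w (by norm_num) (by norm_num),
      sugFam_of_lt E H F (-1) 0 (-1) w (by norm_num) (by norm_num), hH0, hF0, hFE1]
    simp only [map_neg, map_zero]
    module
  have L2 : sugawara E H F (-2) w
      = (4 : ℂ)⁻¹ • H (-1) (H (-1) w) - (2 : ℂ)⁻¹ • H (-2) w := by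
    rw [sugawara, finsum_eq_sum_of_support_subset _ s2,
      show Finset.Ioo (-2 - 1 : ℤ) 1 = {-2, -1, 0} by decide]
    rw [Finset.sum_insert (by decide), Finset.sum_pair (by norm_num),
      sugFam_of_ge E H F (-2) (-2) 0 w (by norm_num) (by norm_num),
      sugFam_of_ge E H F (-2) (-1) (-1) w (by norm_num) (by norm_num),
      sugFam_of_lt E H F (-2) 0 (-2) w (by norm_num) (by norm_num), hH0, hF0, hFE2, hF1, hFE11]
    simp only [map_neg, map_zero]
    module
  have L3 : sugawara E H F (-1) (H (-1) w)
      = (-(2 : ℂ)⁻¹) • H (-1) (H (-1) w) + H (-2) w := by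
    rw [sugawara, finsum_eq_sum_of_support_subset _ s3,
      show Finset.Ioo (-1 - 2 : ℤ) 2 = {-2, -1, 0, 1} by decide]
    rw [Finset.sum_insert (by decide), Finset.sum_insert (by decide),
      Finset.sum_pair (by norm_num),
      sugFam_of_ge E H F (-1) (-2) 1 _ (by norm_num) (by norm_num),
      sugFam_of_ge E H F (-1) (-1) 0 _ (by norm_num) (by norm_num),
      sugFam_of_lt E H F (-1) 0 (-1) _ (by norm_num) (by norm_num),
      sugFam_of_lt E H F (-1) 1 (-2) _ (by norm_num) (by norm_num),
      hH1v, hF1v, hE1v, hH0v, hF0v, hFE0v]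
    simp only [map_neg, map_zero, map_smul, hFE2]
    module
  have fam_smul : ∀ (c : ℂ) (u : M),
      sugFam E H F (-1) (c • u) = fun k => c • sugFam E H F (-1) u k := by
    intro c u; funext k; simp only [sugFam, map_smul]
  have L11 : sugawara E H F (-1) (sugawara E H F (-1) w)
      = (-(2 : ℂ)⁻¹) • sugawara E H F (-1) (H (-1) w) := by
    rw [L1, sugawara, fam_smul, ← smul_finsum, smul_comm, sugawara]
  refine ⟨(Finset.finite_toSet _).subset s2, (Finset.finite_toSet _).subset s1, ?_, ?_⟩
  · rw [L1, fam_smul]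
    refine (Finset.finite_toSet _).subset (Set.Subset.trans ?_ s3)
    intro k hk hk0
    exact hk (by simp [hk0])
  · rw [L11, L2, L3]
    obtain rfl : κ = 4 - 2 * τ := by linear_combination hκτ
    simp only [LinearMap.add_apply, LinearMap.smul_apply, Module.End.mul_apply, hF1, hFE11,
      map_zero]
    module

end SLEAffineSL2Two
end

section
/- Let M be a complex vector space carrying a representation of the Virasoro algebra with central charge c, let v ∈ M be a highest weight vector of conformal weight h with v ≠ 0 and L₋₁v ≠ 0, let κ ∈ ℂ with κ ≠ 0, and set χ := (−2L₋₂ + (κ/2)L₋₁²)v. Then L₁χ = 0 and L₂χ = 0 hold if and only if h = (6 − κ)/(2κ) and c = 1 − 3(κ − 4)²/(2κ). -/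
/-!
The vectors `L₁χ` and `L₂χ` lie in weights `h + 1` and `h`, and commuting the positive modes to
the right until they annihilate `v` gives

* `L₁χ = (κ (2h + 1) - 6) • L₋₁v`,
* `L₂χ = (h (3κ - 8) - c) • v`.

Since `L₋₁v` and `v` are nonzero, `χ` is annihilated by both modes exactly when the two scalars
vanish. The first equation determines `h`, and substituting it in the second determines `c`.
-/


namespace SLEVirasoroThree

theorem main {M : Type*} [AddCommGroup M] [Module ℂ M]
    (L : ℤ → Module.End ℂ M) (c : ℂ)
    -- representation of the Virasoro algebra with central charge c
    (hvir : ∀ m n : ℤ, L m * L n - L n * L m =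
      ((m - n : ℤ) : ℂ) • L (m + n) +
        (if m + n = 0 then (((m ^ 3 - m : ℤ) : ℂ) / 12 * c) • (1 : Module.End ℂ M) else 0))
    (v : M) (h : ℂ)
    -- highest weight vector of conformal weight h
    (hann : ∀ n : ℤ, 1 ≤ n → L n v = 0)
    (hL0 : L 0 v = h • v)
    (κ : ℂ)
    (hv : v ≠ 0) (hv1 : L (-1) v ≠ 0) (hκ : κ ≠ 0)
    (χ : M) (hχ : χ = (-2 : ℂ) • L (-2) v + (κ / 2) • L (-1) (L (-1) v)) :
    (L 1 χ = 0 ∧ L 2 χ = 0) ↔ (h = (6 - κ) / (2 * κ) ∧ c = 1 - 3 * (κ - 4) ^ 2 / (2 * κ)) := by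
  have comm : ∀ (m n : ℤ) (x : M), L m (L n x) = L n (L m x) + (((m - n : ℤ) : ℂ) • L (m + n) x +
      (if m + n = 0 then (((m ^ 3 - m : ℤ) : ℂ) / 12 * c) else 0) • x) := by
    intro m n x
    have := congrArg (fun f : Module.End ℂ M => f x) (hvir m n)
    simp only [LinearMap.sub_apply, Module.End.mul_apply, LinearMap.add_apply,
      LinearMap.smul_apply] at this
    rw [← sub_eq_iff_eq_add', this]
    split_ifs <;> simp
  have h1 : L 1 v = 0 := hann 1 le_rfl
  have h2 : L 2 v = 0 := hann 2 (by norm_num)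
  have e11 : L 1 (L (-1) v) = (2 * h) • v := by
    have := comm 1 (-1) v
    norm_num [h1, hL0, smul_smul] at this
    exact this
  have e01 : L 0 (L (-1) v) = (h + 1) • L (-1) v := by
    have := comm 0 (-1) v
    norm_num [hL0] at this
    rw [this]; module
  have e12 : L 1 (L (-2) v) = (3 : ℂ) • L (-1) v := by
    have := comm 1 (-2) v
    norm_num [h1] at this
    exact this
  have e111 : L 1 (L (-1) (L (-1) v)) = (4 * h + 2) • L (-1) v := by
    have := comm 1 (-1) (L (-1) v)
    norm_num [e11, e01] at this
    rw [this]; module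
  have e22 : L 2 (L (-2) v) = (4 * h + c / 2) • v := by
    have := comm 2 (-2) v
    norm_num [h2, hL0] at this
    rw [this]; module
  have e21 : L 2 (L (-1) v) = 0 := by
    have := comm 2 (-1) v
    norm_num [h2, h1] at this
    exact this
  have e211 : L 2 (L (-1) (L (-1) v)) = (6 * h) • v := by
    have := comm 2 (-1) (L (-1) v)
    norm_num [e21, e11] at this
    rw [this]; module
  have k1 : L 1 χ = (κ * (2 * h + 1) - 6) • L (-1) v := by
    rw [hχ, map_add, map_smul, map_smul, e12, e111]; module
  have k2 : L 2 χ = (h * (3 * κ - 8) - c) • v := by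
    rw [hχ, map_add, map_smul, map_smul, e22, e211]; module
  rw [k1, k2, smul_eq_zero_iff_left hv1, smul_eq_zero_iff_left hv]
  have hh : κ * (2 * h + 1) - 6 = 0 ↔ h = (6 - κ) / (2 * κ) := by
    rw [eq_div_iff (by simpa using hκ)]
    constructor <;> intro H <;> linear_combination H
  rw [hh]
  refine and_congr_right fun H => ?_
  have hc : h * (3 * κ - 8) = 1 - 3 * (κ - 4) ^ 2 / (2 * κ) := by
    rw [H]; field_simp; ring
  rw [hc, sub_eq_zero, eq_comm]

end SLEVirasoroThree
end

section
/- Let M be a complex vector space carrying a level-one representation of the affine Lie algebra of sl₂, and let v ∈ M be a fundamental-type highest weight vector. Then the family defining the Segal–Sugawara value L₋₁v has finite support and L₋₁v = (1/2)·H(−1)v. -/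
/-!
Normal ordering puts the mode `max (k, -1 - k) ≥ 0` on the right in the `k`-th term of the family
for `L₋₁ v`, so only `k = 0` and `k = -1` survive on a vector killed by all positive modes.
Since `E(0)v = 0`, `H(0)v = v` and `E(-1)F(0)v = H(-1)v`, each of them equals
`(1/2)H(-1)v + H(-1)v`, and the sum is `3 H(-1)v`.
-/

open scoped BigOperators

namespace SLEAffineSL2Nine

variable {M : Type*} [AddCommGroup M] [Module ℂ M]

/-- Normal ordered product `:A(p)B(q):`. -/
noncomputable def no (A B : ℤ → Module.End ℂ M) (p q : ℤ) : Module.End ℂ M :=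
  if p < q then A p * B q else B q * A p

/-- The family whose (finitely supported) sum defines the level-one Segal–Sugawara
value `L_N u`. -/
noncomputable def sugFam (E H F : ℤ → Module.End ℂ M) (N : ℤ) (u : M) (k : ℤ) : M :=
  ((2 : ℂ)⁻¹ • no H H (N - k) k + no E F (N - k) k + no F E (N - k) k) u

/-- The level-one Segal–Sugawara value
`L_N u = (1/6)·Σ_k ((1/2):H(N−k)H(k): + :E(N−k)F(k): + :F(N−k)E(k):) u`. -/
noncomputable def sugawara (E H F : ℤ → Module.End ℂ M) (N : ℤ) (u : M) : M :=
  (6 : ℂ)⁻¹ • ∑ᶠ k : ℤ, sugFam E H F N u k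

/-- Only `k = 0` and `k = -1` contribute to the family of `L₋₁`: the two give `H(-1)H(0)/2`,
`E(-1)F(0)` and `F(-1)E(0)`, and each other term ends in an annihilating mode. -/
theorem sugFam_neg_one_apply (E H F : ℤ → Module.End ℂ M) (v : M)
    (hann : ∀ n : ℤ, 1 ≤ n → E n v = 0 ∧ H n v = 0 ∧ F n v = 0)
    (hE0 : E 0 v = 0)
    (hH0 : H 0 v = v)
    (hEF1 : E (-1) (F 0 v) = H (-1) v) (k : ℤ) :
    sugFam E H F (-1) v k =
      if k ∈ ({0, -1} : Finset ℤ) then (3 / 2 : ℂ) • H (-1) v else 0 := by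
  unfold sugFam no
  by_cases h0 : k = 0
  · subst h0
    simp [hH0, hE0, hEF1]
    module
  by_cases h1 : k = -1
  · subst h1
    simp [hH0, hE0, hEF1]
    module
  rcases lt_or_ge (-1 - k) k with h | h
  · obtain ⟨a, b, c⟩ := hann k (by lia)
    simp [h, h0, h1, a, b, c]
  · obtain ⟨a, b, c⟩ := hann (-1 - k) (by lia)
    simp [not_lt.mpr h, h0, h1, a, b, c]

theorem main (E H F : ℤ → Module.End ℂ M)
    -- level-one representation of the affine Lie algebra of sl₂
    (hHE : ∀ m n : ℤ, H m * E n - E n * H m = (2 : ℂ) • E (m + n))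
    (hHF : ∀ m n : ℤ, H m * F n - F n * H m = -((2 : ℂ) • F (m + n)))
    (hEF : ∀ m n : ℤ, E m * F n - F n * E m =
      H (m + n) + (if m + n = 0 then (m : ℂ) • (1 : Module.End ℂ M) else 0))
    (hHH : ∀ m n : ℤ, H m * H n - H n * H m =
      if m + n = 0 then ((2 * m : ℤ) : ℂ) • (1 : Module.End ℂ M) else 0)
    (hEE : ∀ m n : ℤ, E m * E n = E n * E m)
    (hFF : ∀ m n : ℤ, F m * F n = F n * F m)
    (v : M)
    -- fundamental-type highest weight vector
    (hann : ∀ n : ℤ, 1 ≤ n → E n v = 0 ∧ H n v = 0 ∧ F n v = 0)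
    (hE0 : E 0 v = 0)
    (hH0 : H 0 v = v)
    (hE1 : E (-1) v = 0)
    (hEF1 : E (-1) (F 0 v) = H (-1) v)
    (hEF2 : E (-2) (F 0 v) = (2 : ℂ)⁻¹ • (H (-1) (H (-1) v) + H (-2) v)) :
    (Function.support (sugFam E H F (-1) v)).Finite ∧
    sugawara E H F (-1) v = (2 : ℂ)⁻¹ • H (-1) v := by
  have hk := sugFam_neg_one_apply E H F v hann hE0 hH0 hEF1
  have hs : Function.support (sugFam E H F (-1) v) ⊆ (({0, -1} : Finset ℤ) : Set ℤ) := by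
    intro k h
    by_contra hn
    exact h ((hk k).trans (if_neg hn))
  refine ⟨(Finset.finite_toSet _).subset hs, ?_⟩
  rw [sugawara, finsum_eq_sum_of_support_subset _ hs, Finset.sum_pair (by norm_num), hk, hk,
    if_pos (by simp), if_pos (by simp)]
  module

end SLEAffineSL2Nine
end

section
/- Let M be a complex vector space carrying a level-one representation of the affine Lie algebra of sl₂, and let v ∈ M be a fundamental-type highest weight vector. Then the family defining the Segal–Sugawara value L₋₂v has finite support and L₋₂v = ( (1/4)·H(−1)² + (1/2)·H(−2) )v. -/
/-!
For `N = -2` the mode pair is `(-2 - k, k)`, and normal ordering puts the larger mode on the right.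
Unless `-2 ≤ k ≤ 0` that larger mode is at least `1` and annihilates `v`, so only three terms of the
Sugawara sum survive. Those for `k = 0` and `k = -2` both reduce to `H(-2)v / 2 + E(-2)F(0)v`, while
the one for `k = -1` is `H(-1)²v / 2 + E(-1)F(-1)v` with `E(-1)F(-1)v = [E(-1), F(-1)]v = H(-2)v`.
Inserting the given value of `E(-2)F(0)v`, the total is `(3/2) H(-1)²v + 3 H(-2)v`.
-/

open scoped BigOperators

namespace SLEAffineSL2Ten

variable {M : Type*} [AddCommGroup M] [Module ℂ M]

/-- Normal ordered product `:A(p)B(q):`. -/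
noncomputable def no (A B : ℤ → Module.End ℂ M) (p q : ℤ) : Module.End ℂ M :=
  if p < q then A p * B q else B q * A p

/-- The family whose (finitely supported) sum defines the level-one Segal–Sugawara
value `L_N u`. -/
noncomputable def sugFam (E H F : ℤ → Module.End ℂ M) (N : ℤ) (u : M) (k : ℤ) : M :=
  ((2 : ℂ)⁻¹ • no H H (N - k) k + no E F (N - k) k + no F E (N - k) k) u

/-- The level-one Segal–Sugawara value
`L_N u = (1/6)·Σ_k ((1/2):H(N−k)H(k): + :E(N−k)F(k): + :F(N−k)E(k):) u`. -/
noncomputable def sugawara (E H F : ℤ → Module.End ℂ M) (N : ℤ) (u : M) : M :=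
  (6 : ℂ)⁻¹ • ∑ᶠ k : ℤ, sugFam E H F N u k

theorem main (E H F : ℤ → Module.End ℂ M)
    -- level-one representation of the affine Lie algebra of sl₂
    (hHE : ∀ m n : ℤ, H m * E n - E n * H m = (2 : ℂ) • E (m + n))
    (hHF : ∀ m n : ℤ, H m * F n - F n * H m = -((2 : ℂ) • F (m + n)))
    (hEF : ∀ m n : ℤ, E m * F n - F n * E m =
      H (m + n) + (if m + n = 0 then (m : ℂ) • (1 : Module.End ℂ M) else 0))
    (hHH : ∀ m n : ℤ, H m * H n - H n * H m =
      if m + n = 0 then ((2 * m : ℤ) : ℂ) • (1 : Module.End ℂ M) else 0)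
    (hEE : ∀ m n : ℤ, E m * E n = E n * E m)
    (hFF : ∀ m n : ℤ, F m * F n = F n * F m)
    (v : M)
    -- fundamental-type highest weight vector
    (hann : ∀ n : ℤ, 1 ≤ n → E n v = 0 ∧ H n v = 0 ∧ F n v = 0)
    (hE0 : E 0 v = 0)
    (hH0 : H 0 v = v)
    (hE1 : E (-1) v = 0)
    (hEF1 : E (-1) (F 0 v) = H (-1) v)
    (hEF2 : E (-2) (F 0 v) = (2 : ℂ)⁻¹ • (H (-1) (H (-1) v) + H (-2) v)) :
    (Function.support (sugFam E H F (-2) v)).Finite ∧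
    sugawara E H F (-2) v = (4 : ℂ)⁻¹ • (H (-1) * H (-1)) v + (2 : ℂ)⁻¹ • H (-2) v := by
  have h_one : E (-1) (F (-1) v) = H (-2) v := by
    have h := congrArg (fun T : Module.End ℂ M => T v) (hEF (-1) (-1))
    simpa [hE1] using h
  have h_pos : ∀ k : ℤ, 1 ≤ k → sugFam E H F (-2) v k = 0 := by
    intro k hk
    obtain ⟨h1, h2, h3⟩ := hann k hk
    have hlt : -2 - k < k := by omega
    simp [sugFam, no, hlt, h1, h2, h3]
  have h_neg : ∀ k : ℤ, k ≤ -3 → sugFam E H F (-2) v k = 0 := by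
    intro k hk
    obtain ⟨h1, h2, h3⟩ := hann (-2 - k) (by omega)
    have hlt : ¬ (-2 - k < k) := by omega
    simp [sugFam, no, hlt, h1, h2, h3]
  have h_supp : Function.support (sugFam E H F (-2) v) ⊆
      (({0, -1, -2} : Finset ℤ) : Set ℤ) := by
    intro k hk
    rw [Function.mem_support] at hk
    have hk1 : ¬ 1 ≤ k := fun h => hk (h_pos k h)
    have hk2 : ¬ k ≤ -3 := fun h => hk (h_neg k h)
    simp only [Finset.coe_insert, Finset.coe_singleton, Set.mem_insert_iff,
      Set.mem_singleton_iff]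
    omega
  have e0 : sugFam E H F (-2) v 0 = (2 : ℂ)⁻¹ • H (-2) v +
      (2 : ℂ)⁻¹ • (H (-1) (H (-1) v) + H (-2) v) := by
    simp [sugFam, no, hH0, hE0, hEF2]
  have e1 : sugFam E H F (-2) v (-1) = (2 : ℂ)⁻¹ • H (-1) (H (-1) v) + H (-2) v := by
    simp [sugFam, no, hE1, h_one]
  have e2 : sugFam E H F (-2) v (-2) = (2 : ℂ)⁻¹ • H (-2) v +
      (2 : ℂ)⁻¹ • (H (-1) (H (-1) v) + H (-2) v) := by
    simp [sugFam, no, hH0, hE0, hEF2]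
  refine ⟨(Finset.finite_toSet _).subset h_supp, ?_⟩
  rw [sugawara, finsum_eq_sum_of_support_subset _ h_supp,
    Finset.sum_insert (by decide), Finset.sum_insert (by decide), Finset.sum_singleton,
    e0, e1, e2, Module.End.mul_apply]
  module

end SLEAffineSL2Ten
end

section
/- Let M be a complex vector space carrying a level-one representation of the affine Lie algebra of sl₂, and let v ∈ M be a fundamental-type highest weight vector. Then the families defining the Segal–Sugawara values L₋₁v and L₋₁(H(−1)v) have finite support, L₋₁(H(−1)v) = ( (1/2)·H(−1)² + H(−2) )v, and consequently L₋₁(L₋₁v) = ( (1/4)·H(−1)² + (1/2)·H(−2) )v. -/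
/-!
For `N = -1` the normally ordered family is symmetric under `k ↦ -1 - k`, and for `k ≥ 0` its value
at `u` is `(1/2) H(-1-k)H(k)u + E(-1-k)F(k)u + F(-1-k)E(k)u`. So if the modes `n > K` kill `u`,
then `L₋₁u` is `1/3` of the sum of these terms over `0 ≤ k ≤ K` (`sugawara_neg_one_eq`).

On `v` only `k = 0` contributes and gives `L₋₁v = (1/2) H(-1)v`. On `w = H(-1)v` the commutation
relations give `H(1)w = 2v`, `F(1)w = 2F(0)v`, `E(0)w = E(1)w = 0`, and all modes `n ≥ 2` kill `w`,
so only `k = 0, 1` contribute; the prescribed value of `E(-2)F(0)v` then evaluates both terms.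
The last claim follows by linearity of `L₋₁`.
-/

open scoped BigOperators

namespace SLEAffineSL2Eleven

variable {M : Type*} [AddCommGroup M] [Module ℂ M]

/-- Normal ordered product `:A(p)B(q):`. -/
noncomputable def no (A B : ℤ → Module.End ℂ M) (p q : ℤ) : Module.End ℂ M :=
  if p < q then A p * B q else B q * A p

/-- The family whose (finitely supported) sum defines the level-one Segal–Sugawara
value `L_N u`. -/
noncomputable def sugFam (E H F : ℤ → Module.End ℂ M) (N : ℤ) (u : M) (k : ℤ) : M :=
  ((2 : ℂ)⁻¹ • no H H (N - k) k + no E F (N - k) k + no F E (N - k) k) u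

/-- The level-one Segal–Sugawara value
`L_N u = (1/6)·Σ_k ((1/2):H(N−k)H(k): + :E(N−k)F(k): + :F(N−k)E(k):) u`. -/
noncomputable def sugawara (E H F : ℤ → Module.End ℂ M) (N : ℤ) (u : M) : M :=
  (6 : ℂ)⁻¹ • ∑ᶠ k : ℤ, sugFam E H F N u k

/-- For `N = -1` normal ordering places the same operator products at `k` and `-1 - k`. -/
lemma sugFam_symm (E H F : ℤ → Module.End ℂ M) (u : M) (k : ℤ) :
    sugFam E H F (-1) u (-1 - k) = sugFam E H F (-1) u k := by
  have h : (-1 : ℤ) - (-1 - k) = k := by ring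
  unfold sugFam no
  rw [h]
  by_cases hk : 0 ≤ k
  · rw [if_neg (by omega : ¬ k < -1 - k), if_pos (by omega : -1 - k < k)]
    simp only [if_neg (by omega : ¬ k < -1 - k), if_pos (by omega : -1 - k < k),
      LinearMap.add_apply]
    abel
  · simp only [if_pos (by omega : k < -1 - k), if_neg (by omega : ¬ -1 - k < k),
      LinearMap.add_apply]
    abel

lemma sugFam_of_nonneg (E H F : ℤ → Module.End ℂ M) (u : M) {k : ℤ} (hk : 0 ≤ k) :
    sugFam E H F (-1) u k =
      (2 : ℂ)⁻¹ • H (-1 - k) (H k u) + E (-1 - k) (F k u) + F (-1 - k) (E k u) := by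
  simp [sugFam, no, if_pos (by omega : -1 - k < k)]

lemma sugFam_support_subset (E H F : ℤ → Module.End ℂ M) (u : M)
    (hu : ∀ n : ℤ, 2 ≤ n → E n u = 0 ∧ H n u = 0 ∧ F n u = 0) :
    Function.support (sugFam E H F (-1) u) ⊆ (({-2, -1, 0, 1} : Finset ℤ) : Set ℤ) := by
  have key : ∀ k : ℤ, 2 ≤ k → sugFam E H F (-1) u k = 0 := by
    intro k hk
    obtain ⟨h1, h2, h3⟩ := hu k hk
    rw [sugFam_of_nonneg E H F u (by omega), h1, h2, h3]
    simp
  intro k hk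
  by_contra hn
  simp only [Finset.coe_insert, Finset.coe_singleton, Set.mem_insert_iff,
    Set.mem_singleton_iff] at hn
  apply hk
  rcases le_or_gt 2 k with h | h
  · exact key k h
  · rw [← sugFam_symm]
    exact key _ (by omega)

/-- If all modes `n ≥ 2` kill `u`, the four surviving terms of `L₋₁u` pair up under `k ↦ -1 - k`. -/
lemma sugawara_neg_one_eq (E H F : ℤ → Module.End ℂ M) (u : M)
    (hu : ∀ n : ℤ, 2 ≤ n → E n u = 0 ∧ H n u = 0 ∧ F n u = 0) :
    sugawara E H F (-1) u = (3 : ℂ)⁻¹ •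
      (((2 : ℂ)⁻¹ • H (-1) (H 0 u) + E (-1) (F 0 u) + F (-1) (E 0 u)) +
       ((2 : ℂ)⁻¹ • H (-2) (H 1 u) + E (-2) (F 1 u) + F (-2) (E 1 u))) := by
  have h0 := sugFam_of_nonneg E H F u (le_refl (0 : ℤ))
  have h1 := sugFam_of_nonneg E H F u (zero_le_one : (0 : ℤ) ≤ 1)
  have s0 := sugFam_symm E H F u 0
  have s1 := sugFam_symm E H F u 1
  norm_num at h0 h1 s0 s1
  rw [sugawara, finsum_eq_sum_of_support_subset _ (sugFam_support_subset E H F u hu)]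
  rw [Finset.sum_insert (by decide), Finset.sum_insert (by decide), Finset.sum_insert (by decide),
    Finset.sum_singleton, s0, s1, h0, h1]
  module

lemma sugawara_smul (E H F : ℤ → Module.End ℂ M) (N : ℤ) (c : ℂ) (u : M) :
    sugawara E H F N (c • u) = c • sugawara E H F N u := by
  have h : sugFam E H F N (c • u) = fun k => c • sugFam E H F N u k := by
    funext k
    simp only [sugFam, map_smul]
  rw [sugawara, sugawara, h, ← smul_finsum, smul_comm]

theorem main (E H F : ℤ → Module.End ℂ M)
    -- level-one representation of the affine Lie algebra of sl₂
    (hHE : ∀ m n : ℤ, H m * E n - E n * H m = (2 : ℂ) • E (m + n))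
    (hHF : ∀ m n : ℤ, H m * F n - F n * H m = -((2 : ℂ) • F (m + n)))
    (hEF : ∀ m n : ℤ, E m * F n - F n * E m =
      H (m + n) + (if m + n = 0 then (m : ℂ) • (1 : Module.End ℂ M) else 0))
    (hHH : ∀ m n : ℤ, H m * H n - H n * H m =
      if m + n = 0 then ((2 * m : ℤ) : ℂ) • (1 : Module.End ℂ M) else 0)
    (hEE : ∀ m n : ℤ, E m * E n = E n * E m)
    (hFF : ∀ m n : ℤ, F m * F n = F n * F m)
    (v : M)
    -- fundamental-type highest weight vector
    (hann : ∀ n : ℤ, 1 ≤ n → E n v = 0 ∧ H n v = 0 ∧ F n v = 0)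
    (hE0 : E 0 v = 0)
    (hH0 : H 0 v = v)
    (hE1 : E (-1) v = 0)
    (hEF1 : E (-1) (F 0 v) = H (-1) v)
    (hEF2 : E (-2) (F 0 v) = (2 : ℂ)⁻¹ • (H (-1) (H (-1) v) + H (-2) v)) :
    (Function.support (sugFam E H F (-1) v)).Finite ∧
    (Function.support (sugFam E H F (-1) (H (-1) v))).Finite ∧
    sugawara E H F (-1) (H (-1) v) = (2 : ℂ)⁻¹ • (H (-1) * H (-1)) v + H (-2) v ∧
    sugawara E H F (-1) (sugawara E H F (-1) v) =
      (4 : ℂ)⁻¹ • (H (-1) * H (-1)) v + (2 : ℂ)⁻¹ • H (-2) v := by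
  have hv2 : ∀ n : ℤ, 2 ≤ n → E n v = 0 ∧ H n v = 0 ∧ F n v = 0 :=
    fun n hn => hann n (by omega)
  have cHE : ∀ (m n : ℤ) (x : M), E n (H m x) = H m (E n x) - (2 : ℂ) • E (m + n) x := by
    intro m n x
    have := LinearMap.congr_fun (hHE m n) x
    simp only [LinearMap.sub_apply, Module.End.mul_apply, LinearMap.smul_apply] at this
    rw [← this]; abel
  have cHF : ∀ (m n : ℤ) (x : M), F n (H m x) = H m (F n x) + (2 : ℂ) • F (m + n) x := by
    intro m n x
    have := LinearMap.congr_fun (hHF m n) x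
    simp only [LinearMap.sub_apply, Module.End.mul_apply, LinearMap.smul_apply,
      LinearMap.neg_apply] at this
    rw [← neg_eq_iff_eq_neg] at this
    rw [← this]; abel
  have cHH : ∀ n : ℤ, n ≠ 1 → ∀ x : M, H n (H (-1) x) = H (-1) (H n x) := by
    intro n hn x
    have := LinearMap.congr_fun (hHH n (-1)) x
    rw [if_neg (by omega)] at this
    simpa [sub_eq_zero] using this
  obtain ⟨e1, h1, f1⟩ := hann 1 le_rfl
  have wH1 : H 1 (H (-1) v) = (2 : ℂ) • v := by
    have := LinearMap.congr_fun (hHH 1 (-1)) v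
    simpa [h1] using this
  have wH0 : H 0 (H (-1) v) = H (-1) v := by rw [cHH 0 (by omega), hH0]
  have wE0 : E 0 (H (-1) v) = 0 := by rw [cHE]; simp [hE0, hE1]
  have wE1 : E 1 (H (-1) v) = 0 := by rw [cHE]; simp [hE0, e1]
  have wF1 : F 1 (H (-1) v) = (2 : ℂ) • F 0 v := by rw [cHF]; simp [f1]
  have wF0 : F 0 (H (-1) v) = H (-1) (F 0 v) + (2 : ℂ) • F (-1) v := by rw [cHF]; simp
  have hw2 : ∀ n : ℤ, 2 ≤ n →
      E n (H (-1) v) = 0 ∧ H n (H (-1) v) = 0 ∧ F n (H (-1) v) = 0 := by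
    intro n hn
    obtain ⟨a, b, c⟩ := hv2 n hn
    obtain ⟨a', b', c'⟩ := hann (-1 + n) (by omega)
    refine ⟨?_, ?_, ?_⟩
    · rw [cHE, a, a']; simp
    · rw [cHH n (by omega), b, map_zero]
    · rw [cHF, c, c']; simp
  have eF : E (-1) (F (-1) v) = H (-2) v := by
    have := LinearMap.congr_fun (hEF (-1) (-1)) v
    simpa [hE1] using this
  have eHF : E (-1) (H (-1) (F 0 v)) = -H (-2) v := by
    rw [cHE, hEF1, show (-1 : ℤ) + -1 = -2 by norm_num, hEF2]
    module
  have Lw : sugawara E H F (-1) (H (-1) v) =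
      (2 : ℂ)⁻¹ • (H (-1) * H (-1)) v + H (-2) v := by
    rw [sugawara_neg_one_eq E H F _ hw2, wH0, wE0, wE1, wF0, wF1, wH1]
    simp only [map_add, map_smul, map_zero, eF, eHF, hEF2, Module.End.mul_apply]
    module
  have Lv : sugawara E H F (-1) v = (2 : ℂ)⁻¹ • H (-1) v := by
    rw [sugawara_neg_one_eq E H F _ hv2, hH0, hE0, hEF1, h1, e1, f1]
    simp only [map_zero]
    module
  refine ⟨(Finset.finite_toSet _).subset (sugFam_support_subset E H F v hv2),
    (Finset.finite_toSet _).subset (sugFam_support_subset E H F _ hw2), Lw, ?_⟩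
  rw [Lv, sugawara_smul, Lw]
  module

end SLEAffineSL2Eleven
end
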